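/- Let X ∼ N(μ, σ²I_d) on ℝ^d and let f : ℝ^d → (0,∞) be twice continuously differentiable with appropriate integrability. Then E[‖X + σ² ∇ log f(X) − μ‖²] = σ²d + 4σ⁴ E[ Δ√f(X) / √f(X) ], where Δ is the Laplacian on ℝ^d. -/

import Mathlib

open MeasureTheory ProbabilityTheory Real Filter

noncomputable def gaussPi (d : ℕ) (m : EuclideanSpace ℝ (Fin d)) (v : ℝ) :
    Measure (EuclideanSpace ℝ (Fin d)) :=
  (Measure.pi fun i : Fin d => gaussianReal (m i) v.toNNReal).map
    ⇑(EuclideanSpace.equiv (Fin d) ℝ).symm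

/-- Laplacian on `ℝ^d` as the sum of second partial derivatives. -/
noncomputable def lap {d : ℕ} (F : EuclideanSpace ℝ (Fin d) → ℝ)
    (x : EuclideanSpace ℝ (Fin d)) : ℝ :=
  ∑ i : Fin d, fderiv ℝ (fun y => fderiv ℝ F y (EuclideanSpace.single i 1)) x
    (EuclideanSpace.single i 1)

/-!
Write `G = ∇ log f`. Expanding the square, `E‖X + σ²G(X) - m‖²` equals
`σ²d + 2σ² E⟪X - m, G(X)⟫ + σ⁴ E‖G(X)‖²`. The gradient of the Gaussian density `ρ` is
`-σ⁻² (x - m) ρ`, so integrating `div (ρ G)` over the whole space gives Stein's identity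
`E⟪X - m, G(X)⟫ = σ² E[div G(X)]`, first for compactly supported `G` and then, by cutoffs, in
general. Finally `∇√f = (√f / 2) G` yields `4 Δ√f / √f = ‖G‖² + 2 div G`.
-/

open scoped ContDiff Gradient RealInnerProductSpace Topology

section Divergence

variable {E : Type*} [NormedAddCommGroup E] [NormedSpace ℝ E]

/-- The divergence of a vector field, as the trace of its derivative. At points where the field is
not differentiable it is `0`. -/
noncomputable def divergence (G : E → E) (x : E) : ℝ :=
  LinearMap.trace ℝ E (fderiv ℝ G x)

variable {G : E → E} {φ : E → ℝ} {x : E}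

lemma hasCompactSupport_divergence (hG : HasCompactSupport G) :
    HasCompactSupport (divergence G) :=
  (hG.fderiv ℝ).comp_left (g := fun A : E →L[ℝ] E => LinearMap.trace ℝ E A) (by simp)

variable [FiniteDimensional ℝ E]

lemma divergence_smul (hφ : DifferentiableAt ℝ φ x) (hG : DifferentiableAt ℝ G x) :
    divergence (fun y => φ y • G y) x = φ x * divergence G x + fderiv ℝ φ x (G x) := by
  simp [divergence, fderiv_fun_smul hφ hG]

lemma continuous_divergence (hG : ContDiff ℝ 1 G) : Continuous (divergence G) :=
  (LinearMap.trace ℝ E ∘ₗ ContinuousLinearMap.coeLM ℝ).continuous_of_finiteDimensional.comp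
    (hG.continuous_fderiv one_ne_zero)

variable [MeasurableSpace E] [BorelSpace E] (μ : Measure E) [μ.IsAddHaarMeasure]

lemma integral_fderiv_eq_zero_of_hasCompactSupport {F : Type*} [NormedAddCommGroup F]
    [NormedSpace ℝ F] {u : E → F} (hu : ContDiff ℝ 1 u) (huc : HasCompactSupport u) :
    ∫ x, fderiv ℝ u x ∂μ = 0 := by
  have hu' : Integrable (fderiv ℝ u) μ :=
    (hu.continuous_fderiv one_ne_zero).integrable_of_hasCompactSupport (huc.fderiv ℝ)
  ext v
  rw [ContinuousLinearMap.integral_apply hu']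
  simpa using integral_smul_fderiv_eq_neg_fderiv_smul_of_integrable (μ := μ) (v := v)
    (f := fun _ => (1 : ℝ)) (g := u) (by simp)
    (by simpa using hu'.apply_continuousLinearMap v)
    (by simpa using hu.continuous.integrable_of_hasCompactSupport huc)
    (by simp) (fun x _ => hu.differentiable one_ne_zero x)

lemma integral_divergence_eq_zero_of_hasCompactSupport (hG : ContDiff ℝ 1 G)
    (hGc : HasCompactSupport G) : ∫ x, divergence G x ∂μ = 0 := by
  let traceCLM : (E →L[ℝ] E) →L[ℝ] ℝ :=
    (LinearMap.trace ℝ E ∘ₗ ContinuousLinearMap.coeLM ℝ).toContinuousLinearMap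
  have hG'int : Integrable (fderiv ℝ G) μ :=
    (hG.continuous_fderiv one_ne_zero).integrable_of_hasCompactSupport (hGc.fderiv ℝ)
  calc ∫ x, divergence G x ∂μ = traceCLM (∫ x, fderiv ℝ G x ∂μ) :=
        traceCLM.integral_comp_comm hG'int
    _ = 0 := by rw [integral_fderiv_eq_zero_of_hasCompactSupport μ hG hGc, map_zero]

lemma integral_mul_divergence_eq_neg_of_hasCompactSupport (hφ : ContDiff ℝ 1 φ)
    (hG : ContDiff ℝ 1 G) (hGc : HasCompactSupport G) :
    ∫ x, φ x * divergence G x ∂μ = -∫ x, fderiv ℝ φ x (G x) ∂μ := by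
  have hφ' : Continuous (fderiv ℝ φ) := hφ.continuous_fderiv one_ne_zero
  have h_int_div : Integrable (fun x => φ x * divergence G x) μ :=
    (hφ.continuous.mul (continuous_divergence hG)).integrable_of_hasCompactSupport
      (hasCompactSupport_divergence hGc).mul_left
  have h_int_fderiv : Integrable (fun x => fderiv ℝ φ x (G x)) μ :=
    (hφ'.clm_apply hG.continuous).integrable_of_hasCompactSupport <|
      hGc.mono <| Function.support_subset_iff'.2 fun x hx => by
        rw [Function.notMem_support.1 hx, map_zero]
  rw [eq_neg_iff_add_eq_zero, ← integral_add h_int_div h_int_fderiv,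
    ← integral_divergence_eq_zero_of_hasCompactSupport μ (hφ.smul hG) hGc.smul_left]
  exact integral_congr_ae <| .of_forall fun x =>
    (divergence_smul (hφ.differentiable one_ne_zero x) (hG.differentiable one_ne_zero x)).symm

end Divergence

section Cutoff

variable {E : Type*} [NormedAddCommGroup E] [NormedSpace ℝ E] [FiniteDimensional ℝ E]

variable (E) in
/-- The bump function dilated by `cutoff`: it is `1` on the unit ball and vanishes outside the ball
of radius `2`. -/
noncomputable def unitBump : ContDiffBump (0 : E) := ⟨1, 2, one_pos, one_lt_two⟩

/-- The standard cutoff functions: dilations of a fixed bump function, tending pointwise to `1`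
while their derivatives are uniformly `O(1 / (n + 1))`. They reduce integration by parts to
compactly supported fields. -/
noncomputable def cutoff (n : ℕ) (x : E) : ℝ := unitBump E ((1 / (n + 1) : ℝ) • x)

lemma contDiff_cutoff (n : ℕ) : ContDiff ℝ ∞ (cutoff n : E → ℝ) :=
  (unitBump E).contDiff.comp (contDiff_const_smul _)

lemma hasCompactSupport_cutoff (n : ℕ) : HasCompactSupport (cutoff n : E → ℝ) :=
  (unitBump E).hasCompactSupport.comp_smul (by positivity)

lemma norm_cutoff_le_one (n : ℕ) (x : E) : ‖cutoff n x‖ ≤ 1 := by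
  rw [cutoff, norm_of_nonneg (unitBump E).nonneg]
  exact (unitBump E).le_one

lemma tendsto_cutoff (x : E) : Tendsto (fun n => cutoff n x) atTop (𝓝 1) := by
  have h_bump : unitBump E ((0 : ℝ) • x) = 1 :=
    (unitBump E).one_of_mem_closedBall (by simp [unitBump])
  rw [← h_bump]
  exact ((unitBump E).continuous.tendsto _).comp
    (tendsto_one_div_add_atTop_nhds_zero_nat.smul_const x)

variable (E) in
lemma exists_norm_fderiv_cutoff_le :
    ∃ C, ∀ (n : ℕ) (x : E), ‖fderiv ℝ (cutoff n) x‖ ≤ (1 / (n + 1 : ℝ)) * C := by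
  obtain ⟨C, hC⟩ := ((unitBump E).hasCompactSupport.fderiv ℝ).exists_bound_of_continuous
    ((unitBump E).contDiff.continuous_fderiv one_ne_zero)
  refine ⟨C, fun n x => ?_⟩
  have h_fderiv : fderiv ℝ (cutoff n) x =
      (1 / (n + 1 : ℝ)) • fderiv ℝ (unitBump E) ((1 / (n + 1 : ℝ)) • x) := fderiv_comp_smul _
  rw [h_fderiv, norm_smul, norm_of_nonneg (by positivity)]
  gcongr
  exact hC _

variable [MeasurableSpace E] {μ : Measure E}

lemma tendsto_integral_fderiv_cutoff_apply {G : E → E} (hG : Integrable G μ) :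
    Tendsto (fun n => ∫ x, fderiv ℝ (cutoff n) x (G x) ∂μ) atTop (𝓝 0) := by
  obtain ⟨C, hC⟩ := exists_norm_fderiv_cutoff_le E
  have h_le (n : ℕ) : ‖∫ x, fderiv ℝ (cutoff n) x (G x) ∂μ‖ ≤
      (1 / (n + 1 : ℝ)) * (C * ∫ x, ‖G x‖ ∂μ) := by
    rw [← mul_assoc, ← integral_const_mul]
    exact norm_integral_le_of_norm_le (hG.norm.const_mul _)
      (.of_forall fun x => ContinuousLinearMap.le_of_opNorm_le _ (hC n x) _)
  refine squeeze_zero_norm h_le ?_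
  simpa using tendsto_one_div_add_atTop_nhds_zero_nat.mul_const (C * ∫ x, ‖G x‖ ∂μ)

variable [BorelSpace E]

lemma integrable_cutoff_mul {F : E → ℝ} (hF : Integrable F μ) (n : ℕ) :
    Integrable (fun x => cutoff n x * F x) μ :=
  hF.bdd_mul (contDiff_cutoff n).continuous.aestronglyMeasurable
    (.of_forall (norm_cutoff_le_one n))

lemma tendsto_integral_cutoff_mul {F : E → ℝ} (hF : Integrable F μ) :
    Tendsto (fun n => ∫ x, cutoff n x * F x ∂μ) atTop (𝓝 (∫ x, F x ∂μ)) := by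
  refine tendsto_integral_of_dominated_convergence (fun x => ‖F x‖)
    (fun n => (integrable_cutoff_mul hF n).aestronglyMeasurable) hF.norm
    (fun n => .of_forall fun x => ?_) (.of_forall fun x => ?_)
  · rw [norm_mul]
    exact mul_le_of_le_one_left (norm_nonneg _) (norm_cutoff_le_one n x)
  · simpa using (tendsto_cutoff x).mul_const (F x)

lemma integrable_fderiv_cutoff_apply {G : E → E} (hG : Integrable G μ) (n : ℕ) :
    Integrable (fun x => fderiv ℝ (cutoff n) x (G x)) μ := by
  obtain ⟨C, hC⟩ := exists_norm_fderiv_cutoff_le E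
  have h_cont := (contDiff_cutoff (E := E) n).continuous_fderiv (by simp)
  refine (hG.norm.const_mul ((1 / (n + 1 : ℝ)) * C)).mono' ?_ (.of_forall fun x => ?_)
  · exact (ContinuousLinearMap.id ℝ _).aestronglyMeasurable_comp₂ h_cont.aestronglyMeasurable
      hG.aestronglyMeasurable
  · exact ContinuousLinearMap.le_of_opNorm_le _ (hC n x) _

lemma integral_eq_integral_divergence_of_forall_hasCompactSupport {s : E → StrongDual ℝ E}
    (hs : ∀ H : E → E, ContDiff ℝ 1 H → HasCompactSupport H →
      ∫ x, s x (H x) ∂μ = ∫ x, divergence H x ∂μ)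
    {G : E → E} (hG : ContDiff ℝ 1 G) (hGint : Integrable G μ)
    (hsG : Integrable (fun x => s x (G x)) μ) (hdiv : Integrable (divergence G) μ) :
    ∫ x, s x (G x) ∂μ = ∫ x, divergence G x ∂μ := by
  have h_cutoff (n : ℕ) : ∫ x, cutoff n x * s x (G x) ∂μ =
      ∫ x, cutoff n x * divergence G x ∂μ + ∫ x, fderiv ℝ (cutoff n) x (G x) ∂μ := by
    rw [← integral_add (integrable_cutoff_mul hdiv n) (integrable_fderiv_cutoff_apply hGint n)]
    simpa [divergence_smul ((contDiff_cutoff n).differentiable (by simp) _)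
      (hG.differentiable one_ne_zero _)] using hs (fun x => cutoff n x • G x)
      (((contDiff_cutoff n).of_le (by simp)).smul hG) (hasCompactSupport_cutoff n).smul_right
  have h_lim := (tendsto_integral_cutoff_mul hdiv).add
    (tendsto_integral_fderiv_cutoff_apply hGint)
  simp only [← h_cutoff, add_zero] at h_lim
  exact tendsto_nhds_unique (tendsto_integral_cutoff_mul hsG) h_lim

end Cutoff

section GaussianDensity

variable {E : Type*} [NormedAddCommGroup E] [InnerProductSpace ℝ E]

/-- The density of the isotropic Gaussian with mean `m` and covariance `v • 1`, for `0 < v`. -/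
noncomputable def gaussianDensity (m : E) (v : ℝ) (x : E) : ℝ :=
  (√(2 * π * v))⁻¹ ^ Module.finrank ℝ E * exp (-‖x - m‖ ^ 2 / (2 * v))

lemma gaussianDensity_nonneg (m : E) (v : ℝ) (x : E) : 0 ≤ gaussianDensity m v x := by
  unfold gaussianDensity
  positivity

lemma contDiff_gaussianDensity {n : ℕ∞ω} (m : E) (v : ℝ) :
    ContDiff ℝ n (gaussianDensity m v) :=
  contDiff_const.mul ((((contDiff_id.sub contDiff_const).norm_sq ℝ).neg.div_const _).exp)

lemma fderiv_gaussianDensity_apply (m : E) (v : ℝ) (x w : E) :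
    fderiv ℝ (gaussianDensity m v) x w = -(gaussianDensity m v x * (v⁻¹ * ⟪x - m, w⟫)) := by
  have h_norm_sq : HasFDerivAt (fun y : E => ‖y - m‖ ^ 2) (2 • innerSL ℝ (x - m)) x :=
    ((hasFDerivAt_id x).sub_const m).norm_sq
  have h_density : HasFDerivAt (gaussianDensity m v) _ x :=
    ((h_norm_sq.neg.mul_const (2 * v)⁻¹).exp).const_mul _
  rw [h_density.fderiv]
  simp only [gaussianDensity, div_eq_mul_inv, mul_inv, Pi.neg_apply, smul_apply, neg_apply,
    innerSL_apply_apply, smul_eq_mul, nsmul_eq_mul]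
  ring

variable [FiniteDimensional ℝ E] [MeasurableSpace E] [BorelSpace E]

lemma integral_gaussianDensity_mul_inner_of_hasCompactSupport (m : E) (v : ℝ) {G : E → E}
    (hG : ContDiff ℝ 1 G) (hGc : HasCompactSupport G) :
    ∫ x, gaussianDensity m v x * (v⁻¹ * ⟪x - m, G x⟫) =
      ∫ x, gaussianDensity m v x * divergence G x := by
  simp [integral_mul_divergence_eq_neg_of_hasCompactSupport volume
    (contDiff_gaussianDensity m v) hG hGc, fderiv_gaussianDensity_apply, integral_neg]

end GaussianDensity

section GaussPi

lemma pi_withDensity_ofReal {ι : Type*} [Fintype ι] {α : ι → Type*}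
    [∀ i, MeasurableSpace (α i)] {μ : ∀ i, Measure (α i)} [∀ i, SigmaFinite (μ i)]
    {ρ : ∀ i, α i → ℝ} (hρ : ∀ i, Integrable (ρ i) (μ i)) (hρ_nonneg : ∀ i, 0 ≤ ρ i) :
    (Measure.pi fun i => (μ i).withDensity fun t => ENNReal.ofReal (ρ i t)) =
      (Measure.pi μ).withDensity fun x => ENNReal.ofReal (∏ i, ρ i (x i)) := by
  have (i : ι) : IsFiniteMeasure ((μ i).withDensity fun t => ENNReal.ofReal (ρ i t)) :=
    isFiniteMeasure_withDensity_ofReal (hρ i).2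
  refine Measure.pi_eq fun s hs => ?_
  have h_int : Integrable (fun x => ∏ i, ρ i (x i))
      (Measure.pi fun i => (μ i).restrict (s i)) :=
    .fintype_prod_dep fun i => (hρ i).restrict
  rw [withDensity_apply _ (.univ_pi hs), Measure.restrict_pi_pi,
    ← ofReal_integral_eq_lintegral_ofReal h_int
      (.of_forall fun x => Finset.prod_nonneg fun i _ => hρ_nonneg i (x i)),
    integral_fintype_prod_eq_prod,
    ENNReal.ofReal_prod_of_nonneg fun i _ => integral_nonneg (hρ_nonneg i)]
  refine Finset.prod_congr rfl fun i _ => ?_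
  rw [withDensity_apply _ (hs i), ofReal_integral_eq_lintegral_ofReal (hρ i).restrict
    (.of_forall (hρ_nonneg i))]

variable {d : ℕ} (m : EuclideanSpace ℝ (Fin d)) {v : ℝ}

lemma prod_gaussianPDFReal_eq_gaussianDensity (hv : 0 ≤ v) (x : Fin d → ℝ) :
    ∏ i, gaussianPDFReal (m i) v.toNNReal (x i) = gaussianDensity m v (WithLp.toLp 2 x) := by
  simp [gaussianPDFReal, gaussianDensity, Finset.prod_mul_distrib, ← exp_sum, coe_toNNReal v hv,
    EuclideanSpace.norm_sq_eq, ← Finset.sum_div]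

lemma gaussPi_eq_withDensity (hv : 0 < v) :
    gaussPi d m v = volume.withDensity fun x => ENNReal.ofReal (gaussianDensity m v x) := by
  have h_pi : (Measure.pi fun i => gaussianReal (m i) v.toNNReal) =
      volume.withDensity fun x => ENNReal.ofReal (gaussianDensity m v (WithLp.toLp 2 x)) := by
    simp only [gaussianReal_of_var_ne_zero _ (toNNReal_pos.2 hv).ne', gaussianPDF_def,
      ← prod_gaussianPDFReal_eq_gaussianDensity m hv.le]
    exact pi_withDensity_ofReal (fun i => integrable_gaussianPDFReal _ _)
      fun i => gaussianPDFReal_nonneg _ _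
  have h_toLp := PiLp.volume_preserving_toLp (Fin d)
  have h_meas : Measurable fun x => ENNReal.ofReal (gaussianDensity m v x) :=
    (contDiff_gaussianDensity (n := 0) m v).continuous.measurable.ennreal_ofReal
  ext s hs
  rw [gaussPi, h_pi, PiLp.coe_symm_continuousLinearEquiv,
    Measure.map_apply h_toLp.measurable hs, withDensity_apply _ (h_toLp.measurable hs),
    withDensity_apply _ hs, ← h_toLp.setLIntegral_comp_preimage hs h_meas]

lemma integral_gaussPi {H : Type*} [NormedAddCommGroup H] [NormedSpace ℝ H] (hv : 0 < v)
    (F : EuclideanSpace ℝ (Fin d) → H) :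
    ∫ x, F x ∂gaussPi d m v = ∫ x, gaussianDensity m v x • F x := by
  rw [gaussPi_eq_withDensity m hv, integral_withDensity_eq_integral_toReal_smul
    (contDiff_gaussianDensity (n := 0) m v).continuous.measurable.ennreal_ofReal (by simp)]
  simp [ENNReal.toReal_ofReal (gaussianDensity_nonneg m v _)]

instance isProbabilityMeasure_gaussPi (v : ℝ) : IsProbabilityMeasure (gaussPi d m v) :=
  Measure.isProbabilityMeasure_map (by fun_prop)

lemma measurePreserving_eval_gaussPi (v : ℝ) (i : Fin d) :
    MeasurePreserving (fun x : EuclideanSpace ℝ (Fin d) => x i) (gaussPi d m v)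
      (gaussianReal (m i) v.toNNReal) where
  measurable := by fun_prop
  map_eq := by
    rw [gaussPi, Measure.map_map (by fun_prop) (by fun_prop)]
    exact (measurePreserving_eval (fun i => gaussianReal (m i) v.toNNReal) i).map_eq

lemma memLp_sub_gaussPi (v : ℝ) : MemLp (fun x => x - m) 2 (gaussPi d m v) :=
  .of_eval_piLp fun i => ((memLp_id_gaussianReal 2).sub (memLp_const (m i))).comp_measurePreserving
    (measurePreserving_eval_gaussPi m v i)

lemma integral_sq_eval_sub_gaussPi (hv : 0 ≤ v) (i : Fin d) :
    ∫ x, (x i - m i) ^ 2 ∂gaussPi d m v = v := by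
  have h_eval := measurePreserving_eval_gaussPi m v i
  calc ∫ x, (x i - m i) ^ 2 ∂gaussPi d m v
      = ∫ t, (t - m i) ^ 2 ∂gaussianReal (m i) v.toNNReal := by
        rw [← h_eval.map_eq, integral_map (by fun_prop) (by fun_prop)]
    _ = Var[fun t => t; gaussianReal (m i) v.toNNReal] := by
        rw [variance_eq_integral (by fun_prop), integral_id_gaussianReal]
    _ = v := by rw [variance_fun_id_gaussianReal, coe_toNNReal v hv]

lemma integral_norm_sub_sq_gaussPi (hv : 0 ≤ v) : ∫ x, ‖x - m‖ ^ 2 ∂gaussPi d m v = v * d := by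
  have h_int (i : Fin d) : Integrable (fun x => (x i - m i) ^ 2) (gaussPi d m v) :=
    ((memLp_sub_gaussPi m v).eval_piLp i).integrable_sq
  simp [EuclideanSpace.norm_sq_eq, integral_finsetSum _ fun i _ => h_int i,
    integral_sq_eval_sub_gaussPi m hv, mul_comm]

variable {G : EuclideanSpace ℝ (Fin d) → EuclideanSpace ℝ (Fin d)}

lemma integrable_inner_sub_gaussPi {v : ℝ} (hG : MemLp G 2 (gaussPi d m v)) :
    Integrable (fun x => ⟪x - m, G x⟫) (gaussPi d m v) :=
  memLp_one_iff_integrable.1 <|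
    (innerSL ℝ).memLp_of_bilin 1 (memLp_sub_gaussPi m v) hG

theorem integral_inner_sub_gaussPi (hv : 0 < v) (hG : ContDiff ℝ 1 G)
    (hG_int : Integrable G (gaussPi d m v))
    (h_inner : Integrable (fun x => ⟪x - m, G x⟫) (gaussPi d m v))
    (h_div : Integrable (divergence G) (gaussPi d m v)) :
    ∫ x, ⟪x - m, G x⟫ ∂gaussPi d m v = v * ∫ x, divergence G x ∂gaussPi d m v := by
  rw [← inv_mul_eq_iff_eq_mul₀ hv.ne', ← integral_const_mul]
  refine integral_eq_integral_divergence_of_forall_hasCompactSupport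
    (s := fun x => v⁻¹ • innerSL ℝ (x - m)) (fun H hH hHc => ?_) hG hG_int
    (h_inner.const_mul v⁻¹) h_div
  simp only [integral_gaussPi m hv, smul_eq_mul]
  exact integral_gaussianDensity_mul_inner_of_hasCompactSupport m v hH hHc

theorem integral_norm_add_smul_sub_sq_gaussPi (hv : 0 < v) (hG : ContDiff ℝ 1 G)
    (hG_memLp : MemLp G 2 (gaussPi d m v)) (h_div : Integrable (divergence G) (gaussPi d m v)) :
    ∫ x, ‖x + v • G x - m‖ ^ 2 ∂gaussPi d m v =
      v * d + v ^ 2 * ∫ x, (‖G x‖ ^ 2 + 2 * divergence G x) ∂gaussPi d m v := by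
  have h_expand (x : EuclideanSpace ℝ (Fin d)) : ‖x + v • G x - m‖ ^ 2 =
      ‖x - m‖ ^ 2 + 2 * v * ⟪x - m, G x⟫ + v ^ 2 * ‖G x‖ ^ 2 := by
    rw [add_sub_right_comm, norm_add_sq_real, inner_smul_right, norm_smul, mul_pow, norm_eq_abs,
      sq_abs]
    ring
  have h_sub := (memLp_sub_gaussPi m v).integrable_norm_pow two_ne_zero
  have h_inner := integrable_inner_sub_gaussPi m hG_memLp
  have h_norm := hG_memLp.integrable_norm_pow two_ne_zero
  have h_sub_add_inner :
      Integrable (fun x => ‖x - m‖ ^ 2 + 2 * v * ⟪x - m, G x⟫) (gaussPi d m v) :=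
    h_sub.add (h_inner.const_mul _)
  simp only [h_expand]
  rw [integral_add h_sub_add_inner (h_norm.const_mul _),
    integral_add h_sub (h_inner.const_mul _), integral_add h_norm (h_div.const_mul _)]
  simp only [integral_const_mul, integral_norm_sub_sq_gaussPi m hv.le,
    integral_inner_sub_gaussPi m hv hG (hG_memLp.integrable one_le_two) h_inner h_div]
  ring

end GaussPi

section Laplacian

variable {E : Type*} [NormedAddCommGroup E] [InnerProductSpace ℝ E]

lemma contDiff_gradient [CompleteSpace E] {k n : ℕ∞ω} {F : E → ℝ} (hF : ContDiff ℝ n F)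
    (hkn : k + 1 ≤ n) : ContDiff ℝ k (∇ F) :=
  (InnerProductSpace.toDual ℝ E).symm.contDiff.comp (hF.fderiv_right hkn)

lemma gradient_sqrt [CompleteSpace E] {f : E → ℝ} {x : E} (hf : DifferentiableAt ℝ f x)
    (hfx : 0 < f x) : ∇ (fun y => √(f y)) x = (2⁻¹ * √(f x)) • ∇ (fun y => log (f y)) x := by
  simp only [gradient, fderiv_sqrt hf hfx.ne', fderiv.log hf hfx.ne', map_smul, smul_smul]
  congr 1
  field_simp
  exact (sq_sqrt hfx.le).symm

lemma divergence_gradient_sqrt [FiniteDimensional ℝ E] {f : E → ℝ} (hf : ContDiff ℝ 2 f)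
    (hf_pos : ∀ x, 0 < f x) (x : E) :
    divergence (∇ fun y => √(f y)) x =
      √(f x) / 4 * (‖∇ (fun y => log (f y)) x‖ ^ 2 + 2 * divergence (∇ fun y => log (f y)) x) := by
  have hf_diff : Differentiable ℝ f := hf.differentiable two_ne_zero
  have h_gradient : ∇ (fun y => √(f y)) = fun y => (2⁻¹ * √(f y)) • ∇ (fun y => log (f y)) y :=
    funext fun y => gradient_sqrt (hf_diff y) (hf_pos y)
  have h_sqrt : DifferentiableAt ℝ (fun y => √(f y)) x := (hf_diff x).sqrt (hf_pos x).ne'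
  have h_log : DifferentiableAt ℝ (∇ fun y => log (f y)) x :=
    (contDiff_gradient (hf.log fun y => (hf_pos y).ne') one_add_one_eq_two.le).differentiable
      one_ne_zero x
  have h_fderiv : fderiv ℝ (fun y => 2⁻¹ * √(f y)) x (∇ (fun y => log (f y)) x) =
      √(f x) / 4 * ‖∇ (fun y => log (f y)) x‖ ^ 2 := by
    rw [fderiv_const_mul h_sqrt, smul_apply, ← inner_gradient_left, h_gradient, inner_smul_left,
      real_inner_self_eq_norm_sq, smul_eq_mul, conj_trivial]
    ring
  rw [h_gradient, divergence_smul (h_sqrt.const_mul 2⁻¹) h_log, h_fderiv]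
  ring

variable {d : ℕ}

lemma lap_eq_divergence_gradient {F : EuclideanSpace ℝ (Fin d) → ℝ} (hF : ContDiff ℝ 2 F)
    (x : EuclideanSpace ℝ (Fin d)) : lap F x = divergence (∇ F) x := by
  have h_diff := (contDiff_gradient hF one_add_one_eq_two.le).differentiable one_ne_zero x
  rw [lap, divergence, LinearMap.trace_eq_sum_inner _ (EuclideanSpace.basisFun (Fin d) ℝ)]
  refine Finset.sum_congr rfl fun i _ => ?_
  have h_partial : (fun y => fderiv ℝ F y (EuclideanSpace.single i 1)) =
      fun y => ⟪∇ F y, EuclideanSpace.single i 1⟫ := funext fun y => inner_gradient_left.symm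
  rw [h_partial, fderiv_inner_apply ℝ h_diff (differentiableAt_const _)]
  simp [real_inner_comm]

lemma four_mul_lap_sqrt_div_sqrt {f : EuclideanSpace ℝ (Fin d) → ℝ} (hf : ContDiff ℝ 2 f)
    (hf_pos : ∀ x, 0 < f x) (x : EuclideanSpace ℝ (Fin d)) :
    4 * (lap (fun y => √(f y)) x / √(f x)) =
      ‖∇ (fun y => log (f y)) x‖ ^ 2 + 2 * divergence (∇ fun y => log (f y)) x := by
  have h_sqrt_pos : 0 < √(f x) := sqrt_pos.2 (hf_pos x)
  rw [lap_eq_divergence_gradient (hf.sqrt fun y => (hf_pos y).ne'),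
    divergence_gradient_sqrt hf hf_pos]
  field_simp

end Laplacian

/-- Stein's unbiased risk identity: for `X ∼ N(m, σ²I_d)` and positive `C²` `f`,
`E[‖X + σ²∇log f(X) − m‖²] = σ²d + 4σ⁴ E[Δ√f(X)/√f(X)]`. -/
theorem stein_risk_identity
    (d : ℕ) (m : EuclideanSpace ℝ (Fin d)) (σ : ℝ) (hσ : 0 < σ)
    (f : EuclideanSpace ℝ (Fin d) → ℝ)
    (hf : ContDiff ℝ 2 f) (hfpos : ∀ x, 0 < f x)
    (hint1 : Integrable
      (fun x => ‖x + σ ^ 2 • gradient (fun y => Real.log (f y)) x - m‖ ^ 2)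
      (gaussPi d m (σ ^ 2)))
    (hint2 : Integrable
      (fun x => ‖gradient (fun y => Real.log (f y)) x‖ ^ 2) (gaussPi d m (σ ^ 2)))
    (hint3 : Integrable
      (fun x => lap (fun y => Real.sqrt (f y)) x / Real.sqrt (f x))
      (gaussPi d m (σ ^ 2))) :
    ∫ x, ‖x + σ ^ 2 • gradient (fun y => Real.log (f y)) x - m‖ ^ 2
        ∂(gaussPi d m (σ ^ 2)) =
      σ ^ 2 * d +
        4 * σ ^ 4 *
          ∫ x, lap (fun y => Real.sqrt (f y)) x / Real.sqrt (f x)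
            ∂(gaussPi d m (σ ^ 2)) := by
  have h_contDiff : ContDiff ℝ 1 (∇ fun y => log (f y)) :=
    contDiff_gradient (hf.log fun y => (hfpos y).ne') one_add_one_eq_two.le
  have h_memLp : MemLp (∇ fun y => log (f y)) 2 (gaussPi d m (σ ^ 2)) :=
    (memLp_two_iff_integrable_sq_norm h_contDiff.continuous.aestronglyMeasurable).2 hint2
  have h_div : Integrable (divergence (∇ fun y => log (f y))) (gaussPi d m (σ ^ 2)) := by
    refine (((hint3.const_mul 4).sub hint2).div_const 2).congr (.of_forall fun x => ?_)
    simp [four_mul_lap_sqrt_div_sqrt hf hfpos]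
  rw [integral_norm_add_smul_sub_sq_gaussPi m (by positivity) h_contDiff h_memLp h_div]
  simp only [← four_mul_lap_sqrt_div_sqrt hf hfpos, integral_const_mul]
  ring
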